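/- arXiv:2402.15167 — 2 statements merged into one kernel-verified Lean document; each statement's English description precedes it below -/
import Mathlib

section
/- Fix integers N ≥ 2, d ≥ 1 and let K be any integer with K ≥ dN + 1. Let μ be the uniform (normalized surface) probability measure on the unit sphere S^{d−1} = {y ∈ ℝ^d : ‖y‖ = 1}. If y_1, …, y_K are drawn independently from μ, then with probability 1 (i.e., for μ^{⊗K}-almost every (y_1, …, y_K)) one has ⋂_{k=1}^{K} {X ∈ (ℝ^d)^N : f̃_{y_k}(X) = 0} = Ω. -/
/-!
The polynomial `f̃_y` is a product of linear forms `X ↦ yᵀ(X_i − X_j)`, so consider independent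
random linear forms `φ_1, …, φ_K` on a vector space, each of which almost surely does not vanish at
any given point of a set `S ∌ 0`. Impose the equations `φ_k = 0` one at a time: as long as some
solution in `S` is left, the next form almost surely does not vanish at it, so the dimension of the
span of the remaining solutions drops. After `dim (span S)` steps no solution is left. For products
of linear forms, run this for each of the finitely many ways to select one factor per product.

A hyperplane section of the sphere is a null set, so this applies to `f̃_y` with `S` the complement
of `Ω`. By translation invariance one may normalise `X_{i₀} = 0`, which is why already `d(N − 1)`
directions suffice.

Fubini's theorem requires the exceptional set to be measurable: it is the projection of a closed set
along `S`, hence a countable union of closed sets when `S` is `σ`-compact.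
-/

/-- `f̃_y(X) = ∏_{i<j} yᵀ(X_i − X_j)`, with points in `EuclideanSpace ℝ (Fin d)`. -/
noncomputable def ftilde (N d : ℕ) (y : EuclideanSpace ℝ (Fin d))
    (X : Fin N → EuclideanSpace ℝ (Fin d)) : ℝ :=
  ∏ i : Fin N, ∏ j ∈ Finset.Ioi i, (∑ l : Fin d, y l * (X i l - X j l))

/-- The intrinsic zero set `Ω`. -/
def intrinsicZero (N d : ℕ) : Set (Fin N → EuclideanSpace ℝ (Fin d)) :=
  {X | ∃ i j : Fin N, i ≠ j ∧ X i = X j}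

open MeasureTheory Metric Module
open scoped InnerProductSpace Pointwise

section Topology

theorem isSigmaCompact_of_isOpen {α : Type*} [TopologicalSpace α] [LocallyCompactSpace α]
    [SecondCountableTopology α] {U : Set α} (hU : IsOpen U) : IsSigmaCompact U := by
  have := hU.locallyCompactSpace
  exact isSigmaCompact_iff_sigmaCompactSpace.2 inferInstance

theorem isSigmaCompact_inter_of_isClosed {α : Type*} [TopologicalSpace α] {S C : Set α}
    (hS : IsSigmaCompact S) (hC : IsClosed C) : IsSigmaCompact (S ∩ C) := by
  obtain ⟨T, hT, rfl⟩ := hS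
  exact ⟨fun n ↦ T n ∩ C, fun n ↦ (hT n).inter_right hC, (Set.iUnion_inter C T).symm⟩

theorem isClosed_setOfPred_exists_mem_of_isCompact {α β : Type*} [TopologicalSpace α]
    [TopologicalSpace β] {C : Set (α × β)} (hC : IsClosed C) {S : Set β} (hS : IsCompact S) :
    IsClosed {a | ∃ b ∈ S, (a, b) ∈ C} := by
  have := isCompact_iff_compactSpace.1 hS
  have hpre : IsClosed {p : α × S | (p.1, (p.2 : β)) ∈ C} := hC.preimage (by fun_prop)
  convert isClosedMap_fst_of_compactSpace _ hpre
  ext a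
  simp

theorem measurableSet_setOfPred_exists_mem_of_isSigmaCompact {α β : Type*} [TopologicalSpace α]
    [MeasurableSpace α] [OpensMeasurableSpace α] [TopologicalSpace β] {C : Set (α × β)}
    (hC : IsClosed C) {S : Set β} (hS : IsSigmaCompact S) :
    MeasurableSet {a | ∃ b ∈ S, (a, b) ∈ C} := by
  obtain ⟨T, hT, rfl⟩ := hS
  have hunion : {a | ∃ b ∈ ⋃ n, T n, (a, b) ∈ C} = ⋃ n, {a | ∃ b ∈ T n, (a, b) ∈ C} := by
    ext a
    simp only [Set.mem_iUnion, Set.mem_ofPred_eq]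
    tauto
  rw [hunion]
  exact .iUnion fun n ↦ (isClosed_setOfPred_exists_mem_of_isCompact hC (hT n)).measurableSet

theorem isOpen_setOfPred_injective (ι E : Type*) [Finite ι] [TopologicalSpace E] [T2Space E] :
    IsOpen {X : ι → E | Function.Injective X} := by
  have hinter : {X : ι → E | Function.Injective X} = ⋂ (i) (j) (_ : i ≠ j), {X | X i ≠ X j} := by
    ext X
    simp only [Set.mem_ofPred_eq, Set.mem_iInter, Function.Injective]
    exact forall₂_congr fun i j ↦ not_imp_not.symm
  rw [hinter]
  exact isOpen_iInter_of_finite fun i ↦ isOpen_iInter_of_finite fun j ↦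
    isOpen_iInter_of_finite fun _ ↦ isOpen_ne_fun (continuous_apply i) (continuous_apply j)

end Topology

section RandomLinearForms

theorem finrank_inter_ker_lt {k V : Type*} [Field k] [AddCommGroup V] [Module k V]
    [FiniteDimensional k V] {S : Set V} {φ : V →ₗ[k] k} {x : V} (hx : x ∈ S) (hφ : φ x ≠ 0) :
    (S ∩ φ.ker).finrank k < S.finrank k := by
  refine Submodule.finrank_lt_finrank_of_lt
    (SetLike.lt_iff_le_and_exists.2 ⟨Submodule.span_mono Set.inter_subset_left, x,
      Submodule.subset_span hx, fun hmem ↦ hφ ?_⟩)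
  exact Submodule.span_le.2 Set.inter_subset_right hmem

variable {V : Type*} [NormedAddCommGroup V] [NormedSpace ℝ V] [FiniteDimensional ℝ V] {K : ℕ}
  {S : Set V}

theorem measurableSet_setOfPred_forall_mem_exists_apply_ne_zero (hS : IsSigmaCompact S) :
    MeasurableSet {φ : Fin K → StrongDual ℝ V | ∀ x ∈ S, ∃ k, φ k x ≠ 0} := by
  have hclosed : IsClosed {p : (Fin K → StrongDual ℝ V) × V | ∀ k, p.1 k p.2 = 0} := by
    simp only [Set.ofPred_forall]
    exact isClosed_iInter fun k ↦ isClosed_eq (by fun_prop) continuous_const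
  convert (measurableSet_setOfPred_exists_mem_of_isSigmaCompact hclosed hS).compl
  ext φ
  simp

theorem ae_forall_mem_exists_apply_ne_zero (μ : Fin K → Measure (StrongDual ℝ V))
    [∀ k, SigmaFinite (μ k)] (hS : IsSigmaCompact S) (h0 : 0 ∉ S)
    (hμ : ∀ k, ∀ x ∈ S, ∀ᵐ φ ∂μ k, φ x ≠ 0) (hdim : S.finrank ℝ ≤ K) :
    ∀ᵐ φ ∂Measure.pi μ, ∀ x ∈ S, ∃ k, φ k x ≠ 0 := by
  induction K generalizing S with
  | zero =>
    have hspan : Submodule.span ℝ S = ⊥ := Submodule.finrank_eq_zero.1 (Nat.le_zero.1 hdim)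
    refine .of_forall fun φ x hx ↦ (h0 ?_).elim
    rwa [← Submodule.span_eq_bot.1 hspan x hx]
  | succ K ih =>
    obtain rfl | ⟨x₀, hx₀⟩ := S.eq_empty_or_nonempty
    · simp
    have hsplit := (measurePreserving_piFinSuccAbove μ 0).symm
    have hmeas := measurableSet_setOfPred_forall_mem_exists_apply_ne_zero (K := K + 1) hS
    rw [← hsplit.map_eq, ae_map_iff hsplit.measurable.aemeasurable hmeas]
    refine (Measure.ae_prod_iff_ae_ae (hsplit.measurable hmeas)).2 ?_
    filter_upwards [hμ 0 x₀ hx₀] with φ₀ hφ₀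
    have hlt : (S ∩ φ₀.ker).finrank ℝ < S.finrank ℝ :=
      finrank_inter_ker_lt (φ := φ₀.toLinearMap) hx₀ hφ₀
    have hS' : IsSigmaCompact (S ∩ φ₀.ker) := isSigmaCompact_inter_of_isClosed hS φ₀.isClosed_ker
    filter_upwards [ih (fun k ↦ μ k.succ) hS' (fun h ↦ h0 h.1) (fun k x hx ↦ hμ _ x hx.1)
      (by omega)] with φ hφ x hx
    by_cases hφ₀x : φ₀ x = 0
    · obtain ⟨k, hk⟩ := hφ x ⟨hx, hφ₀x⟩
      exact ⟨k.succ, hk⟩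
    · exact ⟨0, hφ₀x⟩

theorem ae_forall_mem_exists_forall_apply_ne_zero {α κ : Type*} [MeasurableSpace α] [Finite κ]
    (μ : Fin K → Measure α) [∀ k, IsFiniteMeasure (μ k)] {L : κ → α → StrongDual ℝ V}
    (hL : ∀ i, Measurable (L i)) (hS : IsSigmaCompact S) (h0 : 0 ∉ S)
    (hμ : ∀ k i, ∀ x ∈ S, ∀ᵐ a ∂μ k, L i a x ≠ 0) (hdim : S.finrank ℝ ≤ K) :
    ∀ᵐ a ∂Measure.pi μ, ∀ x ∈ S, ∃ k, ∀ i, L i (a k) x ≠ 0 := by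
  have hselection : ∀ s : Fin K → κ, ∀ᵐ a ∂Measure.pi μ, ∀ x ∈ S, ∃ k, L (s k) (a k) x ≠ 0 := by
    intro s
    have hmap : MeasurePreserving (fun (a : Fin K → α) k ↦ L (s k) (a k)) (Measure.pi μ)
        (Measure.pi fun k ↦ (μ k).map (L (s k))) :=
      measurePreserving_pi _ _ fun k ↦ (hL (s k)).measurePreserving _
    refine hmap.quasiMeasurePreserving.ae
      (ae_forall_mem_exists_apply_ne_zero _ hS h0 (fun k x hx ↦ ?_) hdim)
    have hne : MeasurableSet {φ : StrongDual ℝ V | φ x ≠ 0} :=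
      (isOpen_ne_fun (by fun_prop) continuous_const).measurableSet
    exact (ae_map_iff (hL (s k)).aemeasurable hne).2 (hμ k (s k) x hx)
  filter_upwards [ae_all_iff.2 hselection] with a ha x hx
  by_contra! hvanish
  choose s hs using hvanish
  obtain ⟨k, hk⟩ := ha s x hx
  exact hk (hs k)

end RandomLinearForms

section Sphere

theorem isProbabilityMeasure_normalized_toSphere {E : Type*} [NormedAddCommGroup E]
    [NormedSpace ℝ E] [FiniteDimensional ℝ E] [Nontrivial E] [MeasurableSpace E] [BorelSpace E]
    (μ : Measure E) [μ.IsAddHaarMeasure] :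
    IsProbabilityMeasure ((μ.toSphere Set.univ)⁻¹ • μ.toSphere) :=
  have : NeZero μ.toSphere := ⟨μ.toSphere_ne_zero⟩
  inferInstance

theorem ae_toSphere_notMem_submodule {E : Type*} [NormedAddCommGroup E] [NormedSpace ℝ E]
    [FiniteDimensional ℝ E] [MeasurableSpace E] [BorelSpace E] (μ : Measure E)
    [μ.IsAddHaarMeasure] {p : Submodule ℝ E} (hp : p ≠ ⊤) :
    ∀ᵐ y : sphere (0 : E) 1 ∂μ.toSphere, (y : E) ∉ p := by
  have hmeas : MeasurableSet {y : sphere (0 : E) 1 | (y : E) ∈ p} :=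
    (p.closed_of_finiteDimensional.preimage continuous_subtype_val).measurableSet
  have hcone : Set.Ioo (0 : ℝ) 1 • ((↑) '' {y : sphere (0 : E) 1 | (y : E) ∈ p}) ⊆ (p : Set E) := by
    rintro _ ⟨r, -, _, ⟨y, hy, rfl⟩, rfl⟩
    exact p.smul_mem r hy
  simp only [ae_iff, not_not]
  rw [μ.toSphere_apply' hmeas, measure_mono_null hcone (Measure.addHaar_submodule μ p hp), mul_zero]

theorem ae_toSphere_inner_ne_zero {E : Type*} [NormedAddCommGroup E] [InnerProductSpace ℝ E]
    [FiniteDimensional ℝ E] [MeasurableSpace E] [BorelSpace E] (μ : Measure E)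
    [μ.IsAddHaarMeasure] {v : E} (hv : v ≠ 0) :
    ∀ᵐ y : sphere (0 : E) 1 ∂μ.toSphere, ⟪(y : E), v⟫_ℝ ≠ 0 := by
  have htop : (ℝ ∙ v)ᗮ ≠ ⊤ := by
    rwa [Ne, Submodule.orthogonal_eq_top_iff, Submodule.span_singleton_eq_bot]
  filter_upwards [ae_toSphere_notMem_submodule μ htop] with y hy
  rwa [Submodule.mem_orthogonal_singleton_iff_inner_left] at hy

end Sphere

section Configurations

theorem finrank_ker_proj {k ι E : Type*} [Field k] [AddCommGroup E] [Module k E]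
    [FiniteDimensional k E] [Fintype ι] (i : ι) :
    finrank k (LinearMap.proj i : (ι → E) →ₗ[k] E).ker = finrank k E * (Fintype.card ι - 1) := by
  have hrank := (LinearMap.proj i : (ι → E) →ₗ[k] E).finrank_range_add_finrank_ker
  rw [LinearMap.range_eq_top.2 (LinearMap.proj_surjective i), finrank_top,
    finrank_pi_fintype, Finset.sum_const, Finset.card_univ, smul_eq_mul] at hrank
  rw [Nat.mul_sub_one, mul_comm, ← hrank, Nat.add_sub_cancel_left]

/-- The linear form `X ↦ yᵀ(X_i − X_j)` on configurations, as a continuous linear function of the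
direction `y`. -/
noncomputable def pairForm {ι : Type*} (E : Type*) [NormedAddCommGroup E] [InnerProductSpace ℝ E]
    (i j : ι) : E →L[ℝ] StrongDual ℝ (ι → E) :=
  (ContinuousLinearMap.precomp ℝ (.proj i - .proj j)).comp (innerSL ℝ)

theorem pairForm_apply {ι E : Type*} [NormedAddCommGroup E] [InnerProductSpace ℝ E]
    (i j : ι) (y : E) (X : ι → E) : pairForm E i j y X = ⟪y, X i - X j⟫_ℝ := rfl

theorem ae_forall_injective_exists_forall_inner_sub_ne_zero {α ι E : Type*} [MeasurableSpace α]
    [Fintype ι] [Nontrivial ι] [NormedAddCommGroup E] [InnerProductSpace ℝ E]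
    [FiniteDimensional ℝ E] [MeasurableSpace E] [BorelSpace E] {K : ℕ}
    (μ : Fin K → Measure α) [∀ k, IsFiniteMeasure (μ k)] {Y : α → E} (hY : Measurable Y)
    (hμ : ∀ k, ∀ v : E, v ≠ 0 → ∀ᵐ a ∂μ k, ⟪Y a, v⟫_ℝ ≠ 0)
    (hK : finrank ℝ E * (Fintype.card ι - 1) ≤ K) :
    ∀ᵐ a ∂Measure.pi μ, ∀ X : ι → E, X.Injective →
      ∃ k, ∀ i j, i ≠ j → ⟪Y (a k), X i - X j⟫_ℝ ≠ 0 := by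
  obtain ⟨i₀⟩ : Nonempty ι := inferInstance
  let S : Set (ι → E) := {X | X.Injective} ∩ (LinearMap.proj i₀ : (ι → E) →ₗ[ℝ] E).ker
  have hS : IsSigmaCompact S := isSigmaCompact_inter_of_isClosed
    (isSigmaCompact_of_isOpen (isOpen_setOfPred_injective ι E))
    (Submodule.closed_of_finiteDimensional _)
  have h0 : 0 ∉ S := fun h ↦ (exists_pair_ne ι).elim fun i ⟨j, hij⟩ ↦ hij (h.1 rfl)
  have hdim : S.finrank ℝ ≤ K :=
    (Submodule.finrank_mono (Submodule.span_le.2 Set.inter_subset_right)).trans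
      ((finrank_ker_proj i₀).trans_le hK)
  have hL (p : {p : ι × ι // p.1 ≠ p.2}) :
      Measurable fun a ↦ pairForm E p.1.1 p.1.2 (Y a) :=
    (pairForm E p.1.1 p.1.2).continuous.measurable.comp hY
  have hne (k) (p : {p : ι × ι // p.1 ≠ p.2}) (X) (hX : X ∈ S) :
      ∀ᵐ a ∂μ k, pairForm E p.1.1 p.1.2 (Y a) X ≠ 0 :=
    hμ k _ (sub_ne_zero.2 (hX.1.ne p.2))
  filter_upwards [ae_forall_mem_exists_forall_apply_ne_zero μ hL hS h0 hne hdim] with a ha X hX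
  obtain ⟨k, hk⟩ := ha (fun i ↦ X i - X i₀) ⟨fun i j h ↦ hX (sub_left_injective h), by simp⟩
  refine ⟨k, fun i j hij ↦ ?_⟩
  simpa only [pairForm_apply, sub_sub_sub_cancel_right] using hk ⟨(i, j), hij⟩

theorem mem_intrinsicZero_iff_not_injective {N d : ℕ} {X : Fin N → EuclideanSpace ℝ (Fin d)} :
    X ∈ intrinsicZero N d ↔ ¬ X.Injective := by
  simp only [intrinsicZero, Set.mem_ofPred_eq, Function.not_injective_iff]
  exact exists₂_congr fun i j ↦ and_comm

theorem ftilde_eq_prod_inner (N d : ℕ) (y : EuclideanSpace ℝ (Fin d))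
    (X : Fin N → EuclideanSpace ℝ (Fin d)) :
    ftilde N d y X = ∏ i, ∏ j ∈ Finset.Ioi i, ⟪y, X i - X j⟫_ℝ := by
  simp [ftilde, PiLp.inner_apply, mul_comm]

theorem ftilde_ne_zero_iff {N d : ℕ} {y : EuclideanSpace ℝ (Fin d)}
    {X : Fin N → EuclideanSpace ℝ (Fin d)} :
    ftilde N d y X ≠ 0 ↔ ∀ i j, i ≠ j → ⟪y, X i - X j⟫_ℝ ≠ 0 := by
  simp only [ftilde_eq_prod_inner, Finset.prod_ne_zero_iff, Finset.mem_univ, Finset.mem_Ioi,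
    true_imp_iff]
  refine ⟨fun h i j hij ↦ ?_, fun h i j hij ↦ h i j hij.ne⟩
  obtain hlt | hgt := hij.lt_or_gt
  · exact h i j hlt
  · rw [← neg_sub, inner_neg_right, neg_ne_zero]
    exact h j i hgt

theorem ftilde_eq_zero_of_mem_intrinsicZero {N d : ℕ} {X : Fin N → EuclideanSpace ℝ (Fin d)}
    (hX : X ∈ intrinsicZero N d) (y : EuclideanSpace ℝ (Fin d)) : ftilde N d y X = 0 := by
  obtain ⟨i, j, hij, hXij⟩ := hX
  by_contra hne
  exact ftilde_ne_zero_iff.1 hne i j hij (by rw [hXij, sub_self, inner_zero_right])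

end Configurations

theorem stmt_2_general {N d K : ℕ} (hN : 2 ≤ N) (hK : d * (N - 1) ≤ K) {α : Type*}
    [MeasurableSpace α] (μ : Fin K → Measure α) [∀ k, IsFiniteMeasure (μ k)]
    {Y : α → EuclideanSpace ℝ (Fin d)} (hY : Measurable Y)
    (hμ : ∀ k, ∀ v : EuclideanSpace ℝ (Fin d), v ≠ 0 → ∀ᵐ a ∂μ k, ⟪Y a, v⟫_ℝ ≠ 0) :
    ∀ᵐ a ∂Measure.pi μ,
      (⋂ k, {X : Fin N → EuclideanSpace ℝ (Fin d) | ftilde N d (Y (a k)) X = 0})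
        = intrinsicZero N d := by
  have : Nontrivial (Fin N) := Fin.nontrivial_iff_two_le.2 hN
  have hrank : finrank ℝ (EuclideanSpace ℝ (Fin d)) * (Fintype.card (Fin N) - 1) ≤ K := by
    simpa using hK
  filter_upwards [ae_forall_injective_exists_forall_inner_sub_ne_zero μ hY hμ hrank] with a ha
  refine Set.Subset.antisymm (fun X hX ↦ ?_) fun X hX ↦
    Set.mem_iInter.2 fun k ↦ ftilde_eq_zero_of_mem_intrinsicZero hX (Y (a k))
  rw [mem_intrinsicZero_iff_not_injective]
  intro hinj
  obtain ⟨k, hk⟩ := ha X hinj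
  exact ftilde_ne_zero_iff.2 hk (Set.mem_iInter.1 hX k)

open MeasureTheory in
theorem stmt_2 (N d K : ℕ) (hN : 2 ≤ N) (hd : 1 ≤ d) (hK : d * N + 1 ≤ K)
    -- `μ` is the uniform (normalized surface) probability measure on the unit sphere
    (μ : Measure (Metric.sphere (0 : EuclideanSpace ℝ (Fin d)) 1))
    (hμ : μ = (((volume : Measure (EuclideanSpace ℝ (Fin d))).toSphere) Set.univ)⁻¹ • (volume : Measure (EuclideanSpace ℝ (Fin d))).toSphere) :
    ∀ᵐ y ∂ (Measure.pi fun _ : Fin K => μ),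
      (⋂ k : Fin K,
        {X : Fin N → EuclideanSpace ℝ (Fin d) | ftilde N d (y k : EuclideanSpace ℝ (Fin d)) X = 0})
        = intrinsicZero N d := by
  have : Nonempty (Fin d) := ⟨⟨0, hd⟩⟩
  have : IsProbabilityMeasure μ := hμ ▸ isProbabilityMeasure_normalized_toSphere volume
  have hdim : d * (N - 1) ≤ K :=
    (Nat.mul_le_mul_left d (Nat.sub_le N 1)).trans (Nat.le_of_succ_le hK)
  exact stmt_2_general hN hdim (fun _ ↦ μ) measurable_subtype_coe fun _ v hv ↦
    hμ ▸ Measure.ae_smul_measure (ae_toSphere_inner_ne_zero volume hv) _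
end

section
/- Fix integers N ≥ 2, d ≥ 1, and y ∈ ℝ^d. Let Φ : (ℝ^d)^N → ℝ be continuous, anti-symmetric, and satisfy Φ(X) = 0 whenever yᵀX_i = yᵀX_j for some i ≠ j. Then there exist, for each i ∈ {1, …, N}, functions h_i : (ℝ^d)^N × {1, …, N} → ℝ such that: (a) for each fixed j, the map X ↦ h_i(X, j) is continuous; (b) for every permutation π of {1, …, N} with π(j) = j, h_i((X_{π(1)}, …, X_{π(N)}), j) = h_i((X_1, …, X_N), j); and (c) Φ(X) = det M(X), where M(X) is the N×N matrix with (j, i)-entry h_i(X, j). That is, Φ is represented by a single generalized Slater determinant with continuous entries. -/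
/-!
Let `σ` sort the numbers `yᵀX_k` increasingly. The sorted configuration `X ∘ σ` does not depend on
the labelling of the points, and `Φ X = sign σ * Φ (X ∘ σ)`. Split `Φ (X ∘ σ)` into `N` continuous
factors, each vanishing when `Φ` does, and put them at the nonzero places `(σ i, i)` of the
permutation matrix of `σ`: the determinant is `sign σ * Φ (X ∘ σ)`. The permutation `σ` is locally
constant where the `yᵀX_k` are distinct, and jumps only where all the entries are zero.
-/

/-- `Φ` is anti-symmetric. -/
def IsAntisym (N d : ℕ) (Φ : (Fin N → Fin d → ℝ) → ℝ) : Prop :=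
  ∀ (π : Equiv.Perm (Fin N)) (X : Fin N → Fin d → ℝ),
    Φ (fun i => X (π i)) = ((Equiv.Perm.sign π : ℤ) : ℝ) * Φ X

open Filter Topology Equiv.Perm

section Continuity

lemma continuous_apply_of_eventually_eq_or_eq {X Y κ : Type*} [TopologicalSpace X]
    [TopologicalSpace Y] [Finite κ] {F : κ → X → Y} (hF : ∀ v, Continuous (F v)) {p : X → κ}
    (hp : ∀ x, (∀ᶠ z in 𝓝 x, p z = p x) ∨ ∀ v w, F v x = F w x) :
    Continuous fun x => F (p x) x := by
  refine continuous_iff_continuousAt.2 fun x => ?_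
  rcases hp x with hconst | hagree
  · exact (hF (p x)).continuousAt.congr (hconst.mono fun z hz => by simp only [hz])
  · intro U hU
    have hall : ∀ᶠ z in 𝓝 x, ∀ v, F v z ∈ U :=
      eventually_all.2 fun v => (hF v).continuousAt (by rwa [hagree v (p x)])
    exact hall.mono fun z hz => hz (p z)

lemma continuous_sign_mul {α R : Type*} [Zero α] [LinearOrder α] [TopologicalSpace α]
    [OrderTopology α] [NonAssocRing R] [TopologicalSpace R] [ContinuousMul R] {g : α → R}
    (hg : Continuous g) (hg0 : g 0 = 0) : Continuous fun t => (SignType.sign t : R) * g t := by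
  refine continuous_apply_of_eventually_eq_or_eq (F := fun (v : SignType) t => (v : R) * g t)
    (fun v => continuous_const.mul hg) fun t => ?_
  rcases eq_or_ne t 0 with rfl | ht
  · simp [hg0]
  · exact .inl (tendsto_pure.1 (nhds_discrete SignType ▸ continuousAt_sign_of_ne_zero ht))

lemma exists_continuous_prod_eq_self (ι : Type*) [Fintype ι] [Nonempty ι] :
    ∃ s : ι → ℝ → ℝ, (∀ i, Continuous (s i)) ∧ (∀ i, s i 0 = 0) ∧ ∀ t, ∏ i, s i t = t := by
  classical
  obtain ⟨i₀⟩ := ‹Nonempty ι›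
  have hcard : Fintype.card ι ≠ 0 := Fintype.card_ne_zero
  let root (t : ℝ) : ℝ := |t| ^ (Fintype.card ι : ℝ)⁻¹
  have hroot : Continuous root := continuous_abs.rpow_const fun _ => .inr (by positivity)
  have hroot0 : root 0 = 0 := by simp [root, hcard]
  refine ⟨fun i t => (if i = i₀ then (SignType.sign t : ℝ) else 1) * root t, fun i => ?_,
    fun i => by simp [hroot0], fun t => ?_⟩
  · by_cases hi : i = i₀
    · simpa only [hi, if_true] using continuous_sign_mul hroot hroot0
    · simpa only [hi, if_false, one_mul] using hroot
  · calc ∏ i, (if i = i₀ then (SignType.sign t : ℝ) else 1) * root t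
        = SignType.sign t * root t ^ Fintype.card ι := by
          simp only [Finset.prod_mul_distrib, Finset.prod_ite_eq', Finset.mem_univ, if_true,
            Finset.prod_const, Finset.card_univ]
      _ = SignType.sign t * |t| := by rw [Real.rpow_inv_natCast_pow (abs_nonneg t) hcard]
      _ = t := sign_mul_abs t

end Continuity

lemma det_of_ite_perm_eq {n R : Type*} [Fintype n] [DecidableEq n] [CommRing R]
    (σ : Equiv.Perm n) (c : n → R) :
    (Matrix.of fun j i => if σ i = j then c i else 0).det = ((sign σ : ℤ) : R) * ∏ i, c i := by
  have hperm : (Matrix.of fun j i => if σ i = j then c i else 0) =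
      (Matrix.diagonal c).submatrix (σ⁻¹ : Equiv.Perm n) id := by
    ext j i
    obtain ⟨k, rfl⟩ := σ.surjective j
    rcases eq_or_ne k i with rfl | hki
    · simp
    · simp [hki, hki.symm]
  rw [hperm, Matrix.det_permute, Matrix.det_diagonal, sign_inv]

section SortPerm

variable {N : ℕ} {α : Type*} [LinearOrder α] {a : Fin N → α}

lemma sort_eq_of_strictMono {σ : Equiv.Perm (Fin N)} (h : StrictMono (a ∘ σ)) :
    Tuple.sort a = σ :=
  (Tuple.eq_sort_iff.2 ⟨h.monotone, fun _ _ hij heq => absurd heq (h hij).ne⟩).symm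

lemma strictMono_comp_sort (ha : Function.Injective a) : StrictMono (a ∘ Tuple.sort a) :=
  (Tuple.monotone_sort a).strictMono_of_injective (ha.comp (Tuple.sort a).injective)

lemma sort_comp_perm (ha : Function.Injective a) (π : Equiv.Perm (Fin N)) :
    Tuple.sort (a ∘ π) = π⁻¹ * Tuple.sort a := by
  apply sort_eq_of_strictMono
  simpa [Function.comp_def] using strictMono_comp_sort ha

lemma eventually_sort_eq [TopologicalSpace α] [OrderClosedTopology α]
    (ha : Function.Injective a) : ∀ᶠ b in 𝓝 a, Tuple.sort b = Tuple.sort a := by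
  have hlt : ∀ᶠ b in 𝓝 a, ∀ i j, i < j → b (Tuple.sort a i) < b (Tuple.sort a j) := by
    simp only [eventually_all]
    exact fun i j hij => (continuous_apply _).continuousAt.eventually_lt
      (continuous_apply _).continuousAt (strictMono_comp_sort ha hij)
  exact hlt.mono fun b hb => sort_eq_of_strictMono fun i j => hb i j

end SortPerm

lemma eq_zero_comp_perm_of_not_injective {ι E α R : Type*} [Zero R] {f : E → α}
    {Φ : (ι → E) → R} (hΦ : ∀ X, ¬ Function.Injective (f ∘ X) → Φ X = 0) {X : ι → E}
    (hX : ¬ Function.Injective (f ∘ X)) (σ : Equiv.Perm ι) : Φ (X ∘ σ) = 0 :=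
  hΦ _ fun h => hX ((Equiv.injective_comp σ (f ∘ X)).1 h)

section SlaterEntry

variable {N : ℕ} {E α R : Type*} [LinearOrder α]

/-- The `(j, i)` entry of the generalized Slater matrix: if `σ` sorts the values of `f` on the
configuration `X`, it is the `i`-th factor `s i` of `Φ (X ∘ σ)` for `j = σ i`, and `0` otherwise. -/
def slaterEntry [Zero R] (f : E → α) (s : Fin N → R → R) (Φ : (Fin N → E) → R)
    (i : Fin N) (X : Fin N → E) (j : Fin N) : R :=
  if Tuple.sort (f ∘ X) i = j then s i (Φ (X ∘ Tuple.sort (f ∘ X))) else 0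

variable {f : E → α} {s : Fin N → R → R} {Φ : (Fin N → E) → R}

lemma continuous_slaterEntry [Zero R] [TopologicalSpace R] [TopologicalSpace E]
    [TopologicalSpace α] [OrderClosedTopology α] (hf : Continuous f)
    (hs : ∀ i, Continuous (s i)) (hs0 : ∀ i, s i 0 = 0) (hΦc : Continuous Φ)
    (hΦ : ∀ X, ¬ Function.Injective (f ∘ X) → Φ X = 0) (i j : Fin N) :
    Continuous fun X => slaterEntry f s Φ i X j := by
  refine continuous_apply_of_eventually_eq_or_eq
    (F := fun (σ : Equiv.Perm (Fin N)) X => if σ i = j then s i (Φ (X ∘ σ)) else 0)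
    (p := fun X => Tuple.sort (f ∘ X)) (fun σ => ?_) fun X => ?_
  · split_ifs
    · exact (hs i).comp (hΦc.comp (continuous_pi fun k => continuous_apply (σ k)))
    · exact continuous_const
  · by_cases hX : Function.Injective (f ∘ X)
    · have hcomp : Continuous fun Z : Fin N → E => f ∘ Z :=
        continuous_pi fun k => hf.comp (continuous_apply k)
      exact .inl (hcomp.continuousAt.eventually (eventually_sort_eq hX))
    · simp [eq_zero_comp_perm_of_not_injective hΦ hX, hs0]

lemma slaterEntry_comp_perm [Zero R] (hs0 : ∀ i, s i 0 = 0)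
    (hΦ : ∀ X, ¬ Function.Injective (f ∘ X) → Φ X = 0) (i : Fin N) (X : Fin N → E) (j : Fin N)
    (π : Equiv.Perm (Fin N)) : slaterEntry f s Φ i (X ∘ π) j = slaterEntry f s Φ i X (π j) := by
  by_cases hX : Function.Injective (f ∘ X)
  · have hsort : Tuple.sort (f ∘ X ∘ π) = π⁻¹ * Tuple.sort (f ∘ X) := sort_comp_perm hX π
    have hsorted : (X ∘ π) ∘ (π⁻¹ * Tuple.sort (f ∘ X) : Equiv.Perm (Fin N)) =
        X ∘ Tuple.sort (f ∘ X) := by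
      ext k
      simp
    simp only [slaterEntry, hsort, hsorted, mul_apply, inv_eq_iff_eq]
  · have hXπ : ¬ Function.Injective (f ∘ X ∘ π) := fun h =>
      hX ((Equiv.injective_comp π (f ∘ X)).1 h)
    simp [slaterEntry, eq_zero_comp_perm_of_not_injective hΦ hX,
      eq_zero_comp_perm_of_not_injective hΦ hXπ, hs0]

lemma det_slaterEntry [CommRing R] (hs : ∀ t, ∏ i, s i t = t)
    (hanti : ∀ (π : Equiv.Perm (Fin N)) (X : Fin N → E),
      Φ (X ∘ π) = ((sign π : ℤ) : R) * Φ X) (X : Fin N → E) :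
    (Matrix.of fun j i => slaterEntry f s Φ i X j).det = Φ X := by
  set σ := Tuple.sort (f ∘ X)
  have hsign : ((sign σ : ℤ) : R) * ((sign σ : ℤ) : R) = 1 := by
    rw [← Int.cast_mul, Int.units_coe_mul_self, Int.cast_one]
  calc (Matrix.of fun j i => slaterEntry f s Φ i X j).det
      = ((sign σ : ℤ) : R) * ∏ i, s i (Φ (X ∘ σ)) :=
        det_of_ite_perm_eq σ fun i => s i (Φ (X ∘ σ))
    _ = ((sign σ : ℤ) : R) * (((sign σ : ℤ) : R) * Φ X) := by rw [hs, hanti]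
    _ = Φ X := by rw [← mul_assoc, hsign, one_mul]

end SlaterEntry

theorem stmt_12_general {N : ℕ} [NeZero N] {E α : Type*} [TopologicalSpace E] [LinearOrder α]
    [TopologicalSpace α] [OrderClosedTopology α] {f : E → α} (hf : Continuous f)
    {Φ : (Fin N → E) → ℝ} (hΦc : Continuous Φ)
    (hanti : ∀ (π : Equiv.Perm (Fin N)) (X : Fin N → E),
      Φ (X ∘ π) = ((sign π : ℤ) : ℝ) * Φ X)
    (hΦ : ∀ X, ¬ Function.Injective (f ∘ X) → Φ X = 0) :
    ∃ h : Fin N → (Fin N → E) → Fin N → ℝ,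
      (∀ i j, Continuous fun X => h i X j) ∧
      (∀ i j (π : Equiv.Perm (Fin N)), π j = j → ∀ X, h i (X ∘ π) j = h i X j) ∧
      ∀ X, Φ X = (Matrix.of fun j i => h i X j).det := by
  obtain ⟨s, hs, hs0, hprod⟩ := exists_continuous_prod_eq_self (Fin N)
  refine ⟨slaterEntry f s Φ, continuous_slaterEntry hf hs hs0 hΦc hΦ, fun i j π hπ X => ?_,
    fun X => (det_slaterEntry hprod hanti X).symm⟩
  rw [slaterEntry_comp_perm hs0 hΦ, hπ]

theorem stmt_12 (N d : ℕ) (hN : 2 ≤ N) (hd : 1 ≤ d) (y : Fin d → ℝ)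
    (Φ : (Fin N → Fin d → ℝ) → ℝ) (hΦcont : Continuous Φ) (hΦanti : IsAntisym N d Φ)
    (hΦzero : ∀ X : Fin N → Fin d → ℝ,
      (∃ i j : Fin N, i ≠ j ∧ (∑ l : Fin d, y l * X i l) = ∑ l : Fin d, y l * X j l) →
      Φ X = 0) :
    ∃ h : Fin N → (Fin N → Fin d → ℝ) → Fin N → ℝ,
      -- (a) each entry is continuous in `X`
      (∀ i j, Continuous (fun X => h i X j)) ∧
      -- (b) each entry, as a function of `X`, is symmetric in the coordinates `X_l`, `l ≠ j`
      (∀ i j (π : Equiv.Perm (Fin N)), π j = j →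
        ∀ X : Fin N → Fin d → ℝ, h i (fun m => X (π m)) j = h i X j) ∧
      -- (c) `Φ` is a single generalized Slater determinant
      (∀ X : Fin N → Fin d → ℝ,
        Φ X = Matrix.det (Matrix.of fun j i : Fin N => h i X j)) := by
  have : NeZero N := ⟨by omega⟩
  refine stmt_12_general (f := fun x => ∑ l, y l * x l) (by fun_prop) hΦcont hΦanti fun X hX => ?_
  obtain ⟨i, j, heq, hne⟩ := Function.not_injective_iff.1 hX
  exact hΦzero X ⟨i, j, hne, heq⟩
end
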